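/- Let B ⊂ ℝ³ be open, f = (f⁴,…,f⁷): B → ℝ⁴ and A = (A¹,A²,A³): B → ℝ³ smooth, with v_j(x), F_∇^S, F_∇^B and F_∇ = F_∇^B + F_∇^S as in the context. Then the following are equivalent: (1) *₇φ(v₁(x),v₂(x),v₃(x),·) = 0 for every x ∈ B (the graph S is associative with an appropriate orientation) and F_∇^B = 0 (∇^B is flat); (2) F_∇³/6 + F_∇ ∧ *₇φ = 0 at every point; (3) F_∇³/6 + F_∇ ∧ *₇φ = 0 and φ ∧ *₇(F_∇²) = 0 at every point. -/

import Mathlib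

open scoped BigOperators

noncomputable section

namespace FMpaper

variable {K : Type*} [NormedField K] [NormedAlgebra ℝ K]

/-- Coefficient model for the exterior algebra of `(ℝⁿ)*` with scalars in `K`:
a form is given by its coefficients on the basis `e^S`, `S ⊆ {0, …, n-1}` sorted. -/
abbrev Form (K : Type*) (n : ℕ) := Finset (Fin n) → K

variable {n : ℕ}

/-- Sign such that `e^s ∧ e^t = signMerge s t • e^(s ∪ t)` for disjoint sorted `s, t`. -/
def signMerge (s t : Finset (Fin n)) : K :=
  (-1 : K) ^ (((s ×ˢ t).filter (fun p => p.2 < p.1)).card)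

/-- Wedge product. -/
def wedge (α β : Form K n) : Form K n :=
  fun u => ∑ s ∈ u.powerset, signMerge s (u \ s) * α s * β (u \ s)

/-- Hodge star operator (for the standard inner product and orientation `e^{0⋯(n-1)}`). -/
def hstar (α : Form K n) : Form K n :=
  fun t => signMerge tᶜ t * α tᶜ

/-- Interior product with the basis vector `e_μ`. -/
def iprodB (μ : Fin n) (α : Form K n) : Form K n :=
  fun t => if μ ∈ t then 0
    else (-1 : K) ^ ((t.filter (fun j => j < μ)).card) * α (insert μ t)

/-- Interior product with the vector `v`. -/
def iprod (v : Fin n → K) (α : Form K n) : Form K n :=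
  fun t => ∑ μ, v μ * iprodB μ α t

/-- The basis covector `e^i` as a 1-form. -/
def e1 (i : Fin n) : Form K n := fun s => if s = {i} then 1 else 0

/-- The covector `v♭` dual to a vector `v`. -/
def flat (v : Fin n → K) : Form K n := ∑ i, v i • e1 i

/-- The vector `α♯` dual to a 1-form `α`. -/
def sharp1 (α : Form K n) : Fin n → K := fun i => α {i}

/-- The inner product of forms (extended `K`-bilinearly). -/
def inner' (α β : Form K n) : K := ∑ s, α s * β s

/-- The (Euclidean) norm of a form; for an `√-1 ℝ`-valued form `√-1 γ` this is `‖γ‖`. -/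
def fnorm (α : Form K n) : ℝ := Real.sqrt (∑ s, ‖α s‖ ^ 2)

/-- `α` is homogeneous of degree `k`. -/
def isGrade (k : ℕ) (α : Form K n) : Prop := ∀ s, s.card ≠ k → α s = 0

/-- Evaluation of a `k`-form on `k` vectors. -/
def evalForm {k : ℕ} (α : Form K n) (v : Fin k → (Fin n → K)) : K :=
  ∑ s : Finset (Fin n), α s *
    (if h : s.card = k then
      Matrix.det (Matrix.of fun i j => v i ((s.orderIsoOfFin h j : Fin n))) else 0)

/-- The matrix of the skew-symmetric endomorphism `γ♯` associated with a 2-form `γ`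
via `⟨γ♯ u, v⟩ = γ(u, v)`. -/
def mat2 (γ : Form K n) : Matrix (Fin n) (Fin n) K :=
  Matrix.of fun i j => if i < j then γ {i, j} else if j < i then - γ {i, j} else 0

/-- The standard `G₂` 3-form `φ = e^{123}+e^{145}+e^{167}+e^{246}−e^{257}−e^{347}−e^{356}`
on `ℝ⁷` (indices `1, …, 7` shifted to `0, …, 6`). -/
def phi7 : Form K 7 := fun s =>
  if s = ({0, 1, 2} : Finset (Fin 7)) then 1
  else if s = ({0, 3, 4} : Finset (Fin 7)) then 1
  else if s = ({0, 5, 6} : Finset (Fin 7)) then 1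
  else if s = ({1, 3, 5} : Finset (Fin 7)) then 1
  else if s = ({1, 4, 6} : Finset (Fin 7)) then -1
  else if s = ({2, 3, 6} : Finset (Fin 7)) then -1
  else if s = ({2, 4, 5} : Finset (Fin 7)) then -1
  else 0

/-- `*₇φ = e^{4567}+e^{2367}+e^{2345}+e^{1357}−e^{1346}−e^{1256}−e^{1247}` on `ℝ⁷`. -/
def psi7 : Form K 7 := fun s =>
  if s = ({3, 4, 5, 6} : Finset (Fin 7)) then 1
  else if s = ({1, 2, 5, 6} : Finset (Fin 7)) then 1
  else if s = ({1, 2, 3, 4} : Finset (Fin 7)) then 1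
  else if s = ({0, 2, 4, 6} : Finset (Fin 7)) then 1
  else if s = ({0, 2, 3, 5} : Finset (Fin 7)) then -1
  else if s = ({0, 1, 4, 5} : Finset (Fin 7)) then -1
  else if s = ({0, 1, 3, 6} : Finset (Fin 7)) then -1
  else 0

/-- The `G₂` 3-form `φ` on `V = span{e₁, …, e₇} ⊂ ℝ⁸`, regarded as a form on `ℝ⁸`
annihilated by `i(e₀)` (indices `1, …, 7` of `ℝ⁸`). -/
def phi8 : Form K 8 := fun s =>
  if s = ({1, 2, 3} : Finset (Fin 8)) then 1
  else if s = ({1, 4, 5} : Finset (Fin 8)) then 1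
  else if s = ({1, 6, 7} : Finset (Fin 8)) then 1
  else if s = ({2, 4, 6} : Finset (Fin 8)) then 1
  else if s = ({2, 5, 7} : Finset (Fin 8)) then -1
  else if s = ({3, 4, 7} : Finset (Fin 8)) then -1
  else if s = ({3, 5, 6} : Finset (Fin 8)) then -1
  else 0

/-- `*₇φ` on `V ⊂ ℝ⁸`, regarded as a 4-form on `ℝ⁸` annihilated by `i(e₀)`. -/
def psi8 : Form K 8 := fun s =>
  if s = ({4, 5, 6, 7} : Finset (Fin 8)) then 1
  else if s = ({2, 3, 6, 7} : Finset (Fin 8)) then 1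
  else if s = ({2, 3, 4, 5} : Finset (Fin 8)) then 1
  else if s = ({1, 3, 5, 7} : Finset (Fin 8)) then 1
  else if s = ({1, 3, 4, 6} : Finset (Fin 8)) then -1
  else if s = ({1, 2, 5, 6} : Finset (Fin 8)) then -1
  else if s = ({1, 2, 4, 7} : Finset (Fin 8)) then -1
  else 0

/-- The standard Cayley 4-form `Φ = e⁰ ∧ φ + *₇φ` on `ℝ⁸`. -/
def Phi8 : Form K 8 := wedge (e1 0) phi8 + psi8

/-- The index set of `V = span{e₁, …, e₇} ⊂ ℝ⁸`. -/
def Vset : Finset (Fin 8) := {1, 2, 3, 4, 5, 6, 7}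

/-- The Hodge star `*₇` of `V ⊂ ℝ⁸` (volume form `e^{1⋯7}`), acting on forms on `ℝ⁸`
annihilated by `i(e₀)`. -/
def star7 (α : Form K 8) : Form K 8 :=
  fun t => if (0 : Fin 8) ∈ t then 0 else signMerge (Vset \ t) t * α (Vset \ t)

/-- `α` is (the pullback of) a form on `V`, i.e. `i(e₀) α = 0`. -/
def onV (α : Form K 8) : Prop := ∀ s, (0 : Fin 8) ∈ s → α s = 0

/-- `λ²(α) = ½ (e⁰ ∧ α + i(α♯) φ)` for `α ∈ V*`. -/
def lambda2 (α : Form K 8) : Form K 8 :=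
  (2 : K)⁻¹ • (wedge (e1 0) α + iprod (sharp1 α) phi8)

/-- `λ⁴(α) = (1/√8) (e⁰ ∧ i(α♯) *₇φ − α ∧ φ)` for `α ∈ V*`. -/
def lambda4 (α : Form K 8) : Form K 8 :=
  (algebraMap ℝ K (Real.sqrt 8))⁻¹ • (wedge (e1 0) (iprod (sharp1 α) psi8) - wedge α phi8)

/-- `λ⁶(α) = *₈ λ²(α)` for `α ∈ V*`. -/
def lambda6 (α : Form K 8) : Form K 8 := hstar (lambda2 α)

/-- The projection `π²₇(α) = (α + *₈(Φ ∧ α))/4` onto `Λ²₇`. -/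
def pi27 (α : Form K 8) : Form K 8 := (4 : K)⁻¹ • (α + hstar (wedge Phi8 α))

/-- The projection `π⁴₇(β) = Σ_{μ=1}^{7} ⟨β, λ⁴(e^μ)⟩ λ⁴(e^μ)` onto `Λ⁴₇`. -/
def pi47 (β : Form K 8) : Form K 8 :=
  ∑ μ : Fin 7, inner' β (lambda4 (e1 μ.succ)) • lambda4 (e1 μ.succ)

/-- `τ(u₀,u₁,u₂,u₃) = Σ_{μ=1}^{7} λ⁴(e^μ)(u₀,u₁,u₂,u₃) ⬝ λ⁴(e^μ) = π⁴₇(u₀♭∧u₁♭∧u₂♭∧u₃♭)`. -/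
def tau4 (u : Fin 4 → (Fin 8 → K)) : Form K 8 :=
  ∑ μ : Fin 7, evalForm (lambda4 (e1 μ.succ)) u • lambda4 (e1 μ.succ)

/-- Partial derivative `∂f^a/∂x^j` at `x`. -/
def pd {m p : ℕ} (f : (Fin m → ℝ) → (Fin p → ℝ)) (x : Fin m → ℝ) (j : Fin m) (a : Fin p) : ℝ :=
  fderiv ℝ f x (Pi.single j 1) a


/-! Graph setting for coassociative `T⁴`-fibrations: `ℝ⁷ = ℝ³ × ℝ⁴` with coordinates
`(x¹,x²,x³,y⁴,…,y⁷)`. -/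

/-- The index of the coordinate `x^j` (`j = 1,2,3` shifted to `0,1,2`) in `ℝ⁷`. -/
def xj (j : Fin 3) : Fin 7 := Fin.castAdd 4 j

/-- The index of the coordinate `y^a` (`a = 4,…,7` shifted to `0,…,3`) in `ℝ⁷`. -/
def ya (a : Fin 4) : Fin 7 := a.addNat 3

/-- The spanning tangent vectors `v_j = ∂_j + Σ_a (∂f^a/∂x^j) ∂_a` of the graph of `f`. -/
def vA (f : (Fin 3 → ℝ) → (Fin 4 → ℝ)) (x : Fin 3 → ℝ) (j : Fin 3) : Fin 7 → ℝ :=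
  Pi.single (xj j) 1 + ∑ a : Fin 4, pd f x j a • (Pi.single (ya a) 1 : Fin 7 → ℝ)

/-- The real 2-form `γ` with `F_∇^S = √-1 γ`, i.e. `γ = Σ_{j,a} (∂f^a/∂x^j) dx^j ∧ dy^a`. -/
def gammaA (f : (Fin 3 → ℝ) → (Fin 4 → ℝ)) (x : Fin 3 → ℝ) : Form ℝ 7 :=
  ∑ j : Fin 3, ∑ a : Fin 4, pd f x j a • wedge (e1 (xj j)) (e1 (ya a))

/-- The `√-1 ℝ`-valued curvature 2-form
`F_∇^S = √-1 Σ_{j,a} (∂f^a/∂x^j) dx^j ∧ dy^a` of the real Fourier–Mukai transform. -/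
def FSA (f : (Fin 3 → ℝ) → (Fin 4 → ℝ)) (x : Fin 3 → ℝ) : Form ℂ 7 :=
  fun s => Complex.I * (gammaA f x s : ℂ)

/-- The real 2-form `γ^B` with `F_∇^B = √-1 γ^B`, i.e.
`γ^B = Σ_{i,j} (∂A^j/∂x^i) dx^i ∧ dx^j`. -/
def gammaB7 (A : (Fin 3 → ℝ) → (Fin 3 → ℝ)) (x : Fin 3 → ℝ) : Form ℝ 7 :=
  ∑ i : Fin 3, ∑ j : Fin 3, pd A x i j • wedge (e1 (xj i)) (e1 (xj j))

/-- The `√-1 ℝ`-valued curvature `F_∇^B = √-1 Σ_{i,j} (∂A^j/∂x^i) dx^i ∧ dx^j`. -/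
def FB7 (A : (Fin 3 → ℝ) → (Fin 3 → ℝ)) (x : Fin 3 → ℝ) : Form ℂ 7 :=
  fun s => Complex.I * (gammaB7 A x s : ℂ)

set_option linter.all false
set_option linter.unusedSectionVars false

lemma wedge_empty (α β : Form K n) : wedge α β ∅ = α ∅ * β ∅ := by
  simp [wedge, signMerge]

lemma signMerge_insert_left (i : Fin n) (s t : Finset (Fin n)) (ht : ∀ x ∈ t, i < x) :
    (signMerge (insert i s) t : K) = signMerge s t := by
  unfold signMerge
  congr 2
  ext ⟨a, b⟩
  simp only [Finset.mem_filter, Finset.mem_product, Finset.mem_insert]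
  constructor
  · rintro ⟨⟨rfl | h, hb⟩, hl⟩
    · exact absurd hl (not_lt.mpr (ht _ hb).le)
    · exact ⟨⟨h, hb⟩, hl⟩
  · rintro ⟨⟨h, hb⟩, hl⟩
    exact ⟨⟨Or.inr h, hb⟩, hl⟩

lemma signMerge_insert_right (i : Fin n) (s t : Finset (Fin n)) (hs : ∀ x ∈ s, i < x)
    (hi : i ∉ t) :
    (signMerge s (insert i t) : K) = (-1) ^ s.card * signMerge s t := by
  unfold signMerge
  rw [← pow_add]
  congr 1
  have : ((s ×ˢ insert i t).filter (fun p => p.2 < p.1)) =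
      (s ×ˢ ({i} : Finset (Fin n))) ∪ ((s ×ˢ t).filter (fun p => p.2 < p.1)) := by
    ext ⟨a, b⟩
    simp only [Finset.mem_filter, Finset.mem_product, Finset.mem_insert, Finset.mem_union,
      Finset.mem_singleton]
    constructor
    · rintro ⟨⟨h, rfl | hb⟩, hl⟩
      · exact Or.inl ⟨h, rfl⟩
      · exact Or.inr ⟨⟨h, hb⟩, hl⟩
    · rintro (⟨h, rfl⟩ | ⟨⟨h, hb⟩, hl⟩)
      · exact ⟨⟨h, Or.inl rfl⟩, hs _ h⟩
      · exact ⟨⟨h, Or.inr hb⟩, hl⟩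
  rw [this, Finset.card_union_of_disjoint]
  · simp
  · rw [Finset.disjoint_left]
    rintro ⟨a, b⟩ h1 h2
    simp only [Finset.mem_filter, Finset.mem_product, Finset.mem_singleton] at h1 h2
    exact hi (h1.2 ▸ h2.1.2)

lemma wedge_insert (α β : Form K n) (i : Fin n) (u : Finset (Fin n)) (hu : ∀ x ∈ u, i < x) :
    wedge α β (insert i u) = wedge (fun s => α (insert i s)) β u +
      wedge (fun s => (-1) ^ s.card * α s) (fun s => β (insert i s)) u := by
  have hi : i ∉ u := fun h => lt_irrefl _ (hu _ h)
  unfold wedge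
  rw [Finset.sum_powerset_insert hi, add_comm]
  congr 1
  · apply Finset.sum_congr rfl
    intro s hs
    have hs := Finset.mem_powerset.mp hs
    have : insert i u \ insert i s = u \ s := by
      ext x; simp only [Finset.mem_sdiff, Finset.mem_insert]
      constructor
      · rintro ⟨h | h, h2⟩ <;> simp_all
      · rintro ⟨h, h2⟩
        exact ⟨Or.inr h, by rintro (rfl | h'); exacts [hi h, h2 h']⟩
    rw [this, signMerge_insert_left _ _ _ (fun x hx => hu _ (Finset.mem_sdiff.mp hx).1)]
  · apply Finset.sum_congr rfl
    intro s hs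
    have hs := Finset.mem_powerset.mp hs
    have his : i ∉ s := fun h => hi (hs h)
    rw [Finset.insert_sdiff_of_notMem _ his,
      signMerge_insert_right _ _ _ (fun x hx => hu _ (hs hx)) (by simp [hi])]
    ring

lemma wedge_grade {k l : ℕ} {α β : Form K n} (hα : isGrade k α) (hβ : isGrade l β) :
    isGrade (k + l) (wedge α β) := by
  intro u hu
  apply Finset.sum_eq_zero
  intro s hs
  have hs := Finset.mem_powerset.mp hs
  by_cases h : s.card = k
  · have h2 : (u \ s).card ≠ l := by
      have := Finset.card_sdiff_add_card_eq_card hs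
      omega
    rw [hβ _ h2, mul_zero]
  · rw [hα _ h]; simp

lemma e1_wedge (i j : Fin n) (h : i < j) (s : Finset (Fin n)) :
    wedge (e1 i) (e1 j) s = if s = {i, j} then (1 : K) else 0 := by
  by_cases hs : s = {i, j}
  · subst hs
    have hne : j ≠ i := h.ne'
    rw [wedge_insert _ _ _ _ (by simpa using h), ← insert_empty_eq j,
      wedge_insert _ _ _ _ (by simp), wedge_insert _ _ _ _ (by simp)]
    have h0 : (∅ : Finset (Fin n)) ≠ {i} := by simp
    have h0' : (∅ : Finset (Fin n)) ≠ {j} := by simp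
    have h1 : ({i, j} : Finset (Fin n)) ≠ {i} := by
      intro h; have : j ∈ ({i} : Finset (Fin n)) := h ▸ (by simp)
      simp [hne] at this
    simp [wedge_empty, e1, h0, h0', h1, hne]
  · rw [if_neg hs]
    apply Finset.sum_eq_zero
    intro t ht
    have ht := Finset.mem_powerset.mp ht
    simp only [e1]
    by_cases h1 : t = {i}
    · by_cases h2 : s \ t = {j}
      · exfalso; apply hs
        rw [← Finset.union_sdiff_of_subset ht, h2, h1]; rfl
      · simp [h2]
    · simp [h1]

lemma e1_wedge' (i j : Fin n) (h : i < j) (s : Finset (Fin n)) :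
    wedge (e1 j) (e1 i) s = if s = {i, j} then (-1 : K) else 0 := by
  by_cases hs : s = {i, j}
  · subst hs
    have hne : j ≠ i := h.ne'
    rw [wedge_insert _ _ _ _ (by simpa using h), ← insert_empty_eq j,
      wedge_insert _ _ _ _ (by simp), wedge_insert _ _ _ _ (by simp)]
    have h0 : (∅ : Finset (Fin n)) ≠ {i} := by simp
    have h0' : (∅ : Finset (Fin n)) ≠ {j} := by simp
    have h1 : ({i, j} : Finset (Fin n)) ≠ {j} := by
      intro h; have : i ∈ ({j} : Finset (Fin n)) := h ▸ (by simp)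
      simp [hne.symm] at this
    simp [wedge_empty, e1, h0, h0', h1, hne, hne.symm]
  · rw [if_neg hs]
    apply Finset.sum_eq_zero
    intro t ht
    have ht := Finset.mem_powerset.mp ht
    simp only [e1]
    by_cases h1 : t = {j}
    · by_cases h2 : s \ t = {i}
      · exfalso; apply hs
        rw [← Finset.union_sdiff_of_subset ht, h2, h1, Finset.pair_comm]; rfl
      · simp [h2]
    · simp [h1]

lemma e1_wedge_self (i : Fin n) (s : Finset (Fin n)) :
    wedge (e1 i) (e1 i) s = (0 : K) := by
  apply Finset.sum_eq_zero
  intro t ht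
  simp only [e1]
  by_cases h1 : t = {i}
  · have : s \ t ≠ {i} := by
      intro h
      have h3 : i ∈ s \ t := h ▸ (by simp)
      simp [h1] at h3
    simp [this]
  · simp [h1]

set_option maxRecDepth 100000 in
lemma sixsets : ∀ u : Finset (Fin 7), u.card = 6 →
    u = {0,1,2,3,4,5} ∨ u = {0,1,2,3,4,6} ∨ u = {0,1,2,3,5,6} ∨ u = {0,1,2,4,5,6} ∨
    u = {0,1,3,4,5,6} ∨ u = {0,2,3,4,5,6} ∨ u = {1,2,3,4,5,6} := by decide

lemma psi7_grade : isGrade 4 (psi7 : Form K 7) := by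
  intro s hs
  unfold psi7
  repeat' split_ifs with h
  all_goals first | rfl | (exfalso; subst h; revert hs; decide) | skip
  all_goals (exfalso; subst_vars; revert hs; decide)

lemma phi7_grade : isGrade 3 (phi7 : Form K 7) := by
  intro s hs
  unfold phi7
  repeat' split_ifs with h
  all_goals first | rfl | (exfalso; subst_vars; revert hs; decide)

lemma psi7_sum (s : Finset (Fin 7)) : (psi7 s : K) =
    (if s = {3,4,5,6} then 1 else 0) + (if s = {1,2,5,6} then 1 else 0)
    + (if s = {1,2,3,4} then 1 else 0) + (if s = {0,2,4,6} then 1 else 0)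
    - (if s = {0,2,3,5} then 1 else 0) - (if s = {0,1,4,5} then 1 else 0)
    - (if s = {0,1,3,6} then 1 else 0) := by
  unfold psi7
  split_ifs <;> first | (exfalso; subst_vars; revert ‹_ = _›; decide) | simp

lemma wedge4 {α : Form K n} (hα : isGrade 2 α) (β : Form K n) (i j k l : Fin n)
    (hij : i < j) (hjk : j < k) (hkl : k < l) :
    wedge α β {i, j, k, l} = α {i, j} * β {k, l} - α {i, k} * β {j, l} + α {i, l} * β {j, k}
      + α {j, k} * β {i, l} - α {j, l} * β {i, k} + α {k, l} * β {i, j} := by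
  have hik := hij.trans hjk
  have hjl := hjk.trans hkl
  have hil := hik.trans hkl
  have h0 : α ∅ = 0 := hα _ (by simp)
  have h1 : ∀ a, α {a} = 0 := fun a => hα _ (by simp)
  have h3 : ∀ a b c, a < b → b < c → α {a, b, c} = 0 := fun a b c h h' =>
    hα _ (by simp [h.ne, h'.ne, (h.trans h').ne])
  have h4 : α {i, j, k, l} = 0 :=
    hα _ (by simp [hij.ne, hik.ne, hil.ne, hjk.ne, hjl.ne, hkl.ne])
  rw [← insert_empty_eq l]
  simp only [wedge_insert, wedge_empty, Finset.mem_insert, Finset.notMem_empty, or_false,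
    forall_eq_or_imp, forall_eq, IsEmpty.forall_iff, implies_true, and_self, hij, hik, hil,
    hjk, hjl, hkl]
  simp [h0, h1, h3, h4, hij, hik, hil, hjk, hjl, hkl, hij.ne, hik.ne, hil.ne, hjk.ne, hjl.ne,
    hkl.ne]
  ring

lemma wedge6 {α : Form K n} (hα : isGrade 2 α) {β : Form K n} (hβ : isGrade 4 β)
    (i j k l p q : Fin n)
    (hij : i < j) (hjk : j < k) (hkl : k < l) (hlp : l < p) (hpq : p < q) :
    wedge α β {i, j, k, l, p, q} =
      α {i, j} * β {k, l, p, q} - α {i, k} * β {j, l, p, q} + α {i, l} * β {j, k, p, q}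
      - α {i, p} * β {j, k, l, q} + α {i, q} * β {j, k, l, p}
      + α {j, k} * β {i, l, p, q} - α {j, l} * β {i, k, p, q} + α {j, p} * β {i, k, l, q}
      - α {j, q} * β {i, k, l, p}
      + α {k, l} * β {i, j, p, q} - α {k, p} * β {i, j, l, q} + α {k, q} * β {i, j, l, p}
      + α {l, p} * β {i, j, k, q} - α {l, q} * β {i, j, k, p} + α {p, q} * β {i, j, k, l} := by
  have hik := hij.trans hjk
  have hjl := hjk.trans hkl
  have hkp := hkl.trans hlp
  have hlq := hlp.trans hpq
  have hil := hik.trans hkl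
  have hjp := hjl.trans hlp
  have hkq := hkp.trans hpq
  have hip := hil.trans hlp
  have hjq := hjp.trans hpq
  have hiq := hip.trans hpq
  have h0 : α ∅ = 0 := hα _ (by simp)
  have h1 : ∀ a, α {a} = 0 := fun a => hα _ (by simp)
  have h3 : ∀ a b (s : Finset (Fin n)), a < b → (∀ x ∈ s, b < x) → s.Nonempty →
      α (insert a (insert b s)) = 0 := fun a b s h h' hs =>
    hα _ (by
      have hb : b ∉ s := fun hh => lt_irrefl _ (h' _ hh)
      have ha : a ∉ insert b s := by
        simp only [Finset.mem_insert, not_or]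
        exact ⟨h.ne, fun hh => lt_asymm h (h' _ hh)⟩
      rw [Finset.card_insert_of_notMem ha, Finset.card_insert_of_notMem hb]
      have := hs.card_pos
      omega)
  rw [← insert_empty_eq q]
  simp only [wedge_insert, wedge_empty, Finset.mem_insert, Finset.notMem_empty, or_false,
    forall_eq_or_imp, forall_eq, IsEmpty.forall_iff, implies_true, and_self, hij, hik, hil,
    hjk, hjl, hkl, hip, hiq, hjp, hjq, hkp, hkq, hlp, hlq, hpq]
  simp [h0, h1, h3, hij, hik, hil, hjk, hjl, hkl, hip, hiq, hjp, hjq, hkp, hkq, hlp, hlq, hpq,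
    hij.ne, hik.ne, hil.ne, hjk.ne, hjl.ne, hkl.ne, hip.ne, hiq.ne, hjp.ne, hjq.ne, hkp.ne,
    hkq.ne, hlp.ne, hlq.ne, hpq.ne]
  ring

lemma evalPsi (v : Fin 4 → (Fin 7 → ℝ)) : evalForm psi7 v =
    (Matrix.of fun i j => v i (![3,4,5,6] j)).det + (Matrix.of fun i j => v i (![1,2,5,6] j)).det
    + (Matrix.of fun i j => v i (![1,2,3,4] j)).det + (Matrix.of fun i j => v i (![0,2,4,6] j)).det
    - (Matrix.of fun i j => v i (![0,2,3,5] j)).det - (Matrix.of fun i j => v i (![0,1,4,5] j)).det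
    - (Matrix.of fun i j => v i (![0,1,3,6] j)).det := by
  have key : ∀ (g : Fin 4 → Fin 7) (s : Finset (Fin 7)) (h : s.card = 4) (_ : ∀ i, g i ∈ s)
      (_ : StrictMono g), (if h : s.card = 4 then
      Matrix.det (Matrix.of fun i j => v i ((s.orderIsoOfFin h j : Fin 7))) else 0) =
      (Matrix.of fun i j => v i (g j)).det := by
    intro g s h hg hm
    rw [dif_pos h]
    have := Finset.orderEmbOfFin_unique h hg hm
    rw [this]
    rfl
  unfold evalForm
  simp only [psi7_sum, add_mul, sub_mul, ite_mul, one_mul, zero_mul, Finset.sum_add_distrib,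
    Finset.sum_sub_distrib, Finset.sum_ite_eq', Finset.mem_univ, if_true]
  rw [key ![3,4,5,6] _ (by decide) (by decide) (by decide),
    key ![1,2,5,6] _ (by decide) (by decide) (by decide),
    key ![1,2,3,4] _ (by decide) (by decide) (by decide),
    key ![0,2,4,6] _ (by decide) (by decide) (by decide),
    key ![0,2,3,5] _ (by decide) (by decide) (by decide),
    key ![0,1,4,5] _ (by decide) (by decide) (by decide),
    key ![0,1,3,6] _ (by decide) (by decide) (by decide)]

lemma vA_apply (f : (Fin 3 → ℝ) → (Fin 4 → ℝ)) (x : Fin 3 → ℝ) (j : Fin 3) :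
    vA f x j = ![if j = 0 then 1 else 0, if j = 1 then 1 else 0, if j = 2 then 1 else 0,
      pd f x j 0, pd f x j 1, pd f x j 2, pd f x j 3] := by
  ext i
  fin_cases j <;> fin_cases i <;> simp [vA, xj, ya, Fin.sum_univ_succ, Pi.single_apply, Fin.ext_iff]

lemma FB7_apply (A : (Fin 3 → ℝ) → (Fin 3 → ℝ)) (x : Fin 3 → ℝ) (s : Finset (Fin 7)) :
    gammaB7 A x s = (if s = {0, 1} then pd A x 0 1 - pd A x 1 0 else 0)
      + (if s = {0, 2} then pd A x 0 2 - pd A x 2 0 else 0)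
      + (if s = {1, 2} then pd A x 1 2 - pd A x 2 1 else 0) := by
  have h0 : xj 0 = 0 := rfl
  have h1 : xj 1 = 1 := rfl
  have h2 : xj 2 = 2 := rfl
  simp only [gammaB7, Fin.sum_univ_three, h0, h1, h2, Pi.add_apply, Pi.smul_apply, smul_eq_mul,
    e1_wedge_self, e1_wedge (K := ℝ) (0 : Fin 7) 1 (by decide), e1_wedge (K := ℝ) (0 : Fin 7) 2 (by decide),
    e1_wedge (K := ℝ) (1 : Fin 7) 2 (by decide), e1_wedge' (K := ℝ) (0 : Fin 7) 1 (by decide),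
    e1_wedge' (K := ℝ) (0 : Fin 7) 2 (by decide), e1_wedge' (K := ℝ) (1 : Fin 7) 2 (by decide)]
  split_ifs <;> ring

lemma gammaA_apply (f : (Fin 3 → ℝ) → (Fin 4 → ℝ)) (x : Fin 3 → ℝ) (s : Finset (Fin 7)) :
    gammaA f x s = ∑ j : Fin 3, ∑ a : Fin 4, if s = {xj j, ya a} then pd f x j a else 0 := by
  simp only [gammaA, Finset.sum_apply, Pi.smul_apply, smul_eq_mul]
  refine Finset.sum_congr rfl fun j _ => Finset.sum_congr rfl fun a _ => ?_
  rw [e1_wedge _ _ (by revert j a; decide)]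
  simp

lemma F_grade (A : (Fin 3 → ℝ) → (Fin 3 → ℝ)) (f : (Fin 3 → ℝ) → (Fin 4 → ℝ)) (x : Fin 3 → ℝ) :
    isGrade 2 (FB7 A x + FSA f x) := by
  intro s hs
  have h : ∀ a b : Fin 7, a ≠ b → s ≠ {a, b} := by
    rintro a b hab rfl
    exact hs (Finset.card_pair hab)
  simp only [Pi.add_apply, FB7, FSA, FB7_apply, gammaA_apply]
  have h2 : ∀ j a, s ≠ {xj j, ya a} := fun j a => h _ _ (by revert j a; decide)
  simp [h, h2]

lemma phi7_sum (s : Finset (Fin 7)) : (phi7 s : K) =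
    (if s = {0,1,2} then 1 else 0) + (if s = {0,3,4} then 1 else 0)
    + (if s = {0,5,6} then 1 else 0) + (if s = {1,3,5} then 1 else 0)
    - (if s = {1,4,6} then 1 else 0) - (if s = {2,3,6} then 1 else 0)
    - (if s = {2,4,5} then 1 else 0) := by
  unfold phi7
  split_ifs <;> first | (exfalso; subst_vars; revert ‹_ = _›; decide) | simp

/-- One summand of `φ ∧ *β`. -/
def pt (β : Form K 7) (u S : Finset (Fin 7)) : K :=
  if S ⊆ u then signMerge S (u \ S) * (signMerge (u \ S)ᶜ (u \ S) * β (u \ S)ᶜ) else 0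

lemma wedge_phi (β : Form K 7) (u : Finset (Fin 7)) : wedge phi7 (hstar β) u =
    pt β u {0,1,2} + pt β u {0,3,4} + pt β u {0,5,6} + pt β u {1,3,5}
    - pt β u {1,4,6} - pt β u {2,3,6} - pt β u {2,4,5} := by
  unfold wedge hstar pt
  simp only [phi7_sum, mul_add, mul_sub, add_mul, sub_mul, mul_ite, ite_mul, mul_one, mul_zero,
    zero_mul, Finset.sum_add_distrib, Finset.sum_sub_distrib, Finset.sum_ite_eq',
    Finset.mem_powerset]

lemma pt0 (β : Form K 7) (u S : Finset (Fin 7)) (h : ¬ S ⊆ u) : pt β u S = 0 := if_neg h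

lemma ptE (β : Form K 7) (u S R : Finset (Fin 7)) (h : S ⊆ u) (hR : (u \ S)ᶜ = R)
    (he : Even (((S ×ˢ (u \ S)).filter (fun p => p.2 < p.1)).card +
      ((R ×ˢ (u \ S)).filter (fun p => p.2 < p.1)).card)) : pt β u S = β R := by
  rw [pt, if_pos h, hR, ← mul_assoc, signMerge, signMerge, ← pow_add, he.neg_one_pow, one_mul]

lemma ptO (β : Form K 7) (u S R : Finset (Fin 7)) (h : S ⊆ u) (hR : (u \ S)ᶜ = R)
    (he : Odd (((S ×ˢ (u \ S)).filter (fun p => p.2 < p.1)).card +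
      ((R ×ˢ (u \ S)).filter (fun p => p.2 < p.1)).card)) : pt β u S = - β R := by
  rw [pt, if_pos h, hR, ← mul_assoc, signMerge, signMerge, ← pow_add, he.neg_one_pow]
  ring

lemma phiW0 (β : Form K 7) : wedge phi7 (hstar β) {1,2,3,4,5,6} =
    β {0,1,3,5} - β {0,1,4,6} - β {0,2,3,6} - β {0,2,4,5} := by
  rw [wedge_phi, pt0 _ _ _ (by decide),
    pt0 _ _ _ (by decide),
    pt0 _ _ _ (by decide),
    ptE _ _ _ {0,1,3,5} (by decide) (by decide) (by decide),
    ptE _ _ _ {0,1,4,6} (by decide) (by decide) (by decide),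
    ptE _ _ _ {0,2,3,6} (by decide) (by decide) (by decide),
    ptE _ _ _ {0,2,4,5} (by decide) (by decide) (by decide)]
  ring

lemma phiW1 (β : Form K 7) : wedge phi7 (hstar β) {0,2,3,4,5,6} =
    β {0,1,3,4} + β {0,1,5,6} + β {1,2,3,6} + β {1,2,4,5} := by
  rw [wedge_phi, pt0 _ _ _ (by decide),
    ptE _ _ _ {0,1,3,4} (by decide) (by decide) (by decide),
    ptE _ _ _ {0,1,5,6} (by decide) (by decide) (by decide),
    pt0 _ _ _ (by decide),
    pt0 _ _ _ (by decide),
    ptO _ _ _ {1,2,3,6} (by decide) (by decide) (by decide),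
    ptO _ _ _ {1,2,4,5} (by decide) (by decide) (by decide)]
  ring

lemma phiW2 (β : Form K 7) : wedge phi7 (hstar β) {0,1,3,4,5,6} =
    - β {0,2,3,4} - β {0,2,5,6} - β {1,2,3,5} + β {1,2,4,6} := by
  rw [wedge_phi, pt0 _ _ _ (by decide),
    ptO _ _ _ {0,2,3,4} (by decide) (by decide) (by decide),
    ptO _ _ _ {0,2,5,6} (by decide) (by decide) (by decide),
    ptO _ _ _ {1,2,3,5} (by decide) (by decide) (by decide),
    ptO _ _ _ {1,2,4,6} (by decide) (by decide) (by decide),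
    pt0 _ _ _ (by decide),
    pt0 _ _ _ (by decide)]
  ring

lemma phiW3 (β : Form K 7) : wedge phi7 (hstar β) {0,1,2,4,5,6} =
    β {0,1,2,3} + β {0,3,5,6} - β {1,3,4,6} - β {2,3,4,5} := by
  rw [wedge_phi, ptE _ _ _ {0,1,2,3} (by decide) (by decide) (by decide),
    pt0 _ _ _ (by decide),
    ptE _ _ _ {0,3,5,6} (by decide) (by decide) (by decide),
    pt0 _ _ _ (by decide),
    ptE _ _ _ {1,3,4,6} (by decide) (by decide) (by decide),
    pt0 _ _ _ (by decide),
    ptE _ _ _ {2,3,4,5} (by decide) (by decide) (by decide)]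
  ring

lemma phiW4 (β : Form K 7) : wedge phi7 (hstar β) {0,1,2,3,5,6} =
    - β {0,1,2,4} - β {0,4,5,6} + β {1,3,4,5} - β {2,3,4,6} := by
  rw [wedge_phi, ptO _ _ _ {0,1,2,4} (by decide) (by decide) (by decide),
    pt0 _ _ _ (by decide),
    ptO _ _ _ {0,4,5,6} (by decide) (by decide) (by decide),
    ptE _ _ _ {1,3,4,5} (by decide) (by decide) (by decide),
    pt0 _ _ _ (by decide),
    ptE _ _ _ {2,3,4,6} (by decide) (by decide) (by decide),
    pt0 _ _ _ (by decide)]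
  ring

lemma phiW5 (β : Form K 7) : wedge phi7 (hstar β) {0,1,2,3,4,6} =
    β {0,1,2,5} + β {0,3,4,5} + β {1,4,5,6} + β {2,3,5,6} := by
  rw [wedge_phi, ptE _ _ _ {0,1,2,5} (by decide) (by decide) (by decide),
    ptE _ _ _ {0,3,4,5} (by decide) (by decide) (by decide),
    pt0 _ _ _ (by decide),
    pt0 _ _ _ (by decide),
    ptO _ _ _ {1,4,5,6} (by decide) (by decide) (by decide),
    ptO _ _ _ {2,3,5,6} (by decide) (by decide) (by decide),
    pt0 _ _ _ (by decide)]
  ring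

lemma phiW6 (β : Form K 7) : wedge phi7 (hstar β) {0,1,2,3,4,5} =
    - β {0,1,2,6} - β {0,3,4,6} - β {1,3,5,6} + β {2,4,5,6} := by
  rw [wedge_phi, ptO _ _ _ {0,1,2,6} (by decide) (by decide) (by decide),
    ptO _ _ _ {0,3,4,6} (by decide) (by decide) (by decide),
    pt0 _ _ _ (by decide),
    ptO _ _ _ {1,3,5,6} (by decide) (by decide) (by decide),
    pt0 _ _ _ (by decide),
    pt0 _ _ _ (by decide),
    ptO _ _ _ {2,4,5,6} (by decide) (by decide) (by decide)]
  ring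

/-- 3x3 determinant. -/
def d3 (c : Fin 3 → Fin 4 → ℝ) (i j k : Fin 4) : ℝ :=
  c 0 i * (c 1 j * c 2 k - c 1 k * c 2 j) - c 0 j * (c 1 i * c 2 k - c 1 k * c 2 i)
    + c 0 k * (c 1 i * c 2 j - c 1 j * c 2 i)

/-- Components of the associator. -/
def E0 (c : Fin 3 → Fin 4 → ℝ) : ℝ := c 2 3 - c 1 2 - c 0 1 - d3 c 1 2 3
def E1 (c : Fin 3 → Fin 4 → ℝ) : ℝ := c 2 2 + c 1 3 + c 0 0 + d3 c 0 2 3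
def E2 (c : Fin 3 → Fin 4 → ℝ) : ℝ := - c 2 1 + c 1 0 - c 0 3 - d3 c 0 1 3
def E3 (c : Fin 3 → Fin 4 → ℝ) : ℝ := - c 2 0 - c 1 1 + c 0 2 + d3 c 0 1 2

lemma eval_eq (f : (Fin 3 → ℝ) → (Fin 4 → ℝ)) (x : Fin 3 → ℝ) (w : Fin 7 → ℝ) :
    evalForm psi7 ![vA f x 0, vA f x 1, vA f x 2, w] =
      E0 (pd f x) * (w 3 - (w 0 * pd f x 0 0 + w 1 * pd f x 1 0 + w 2 * pd f x 2 0))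
      + E1 (pd f x) * (w 4 - (w 0 * pd f x 0 1 + w 1 * pd f x 1 1 + w 2 * pd f x 2 1))
      + E2 (pd f x) * (w 5 - (w 0 * pd f x 0 2 + w 1 * pd f x 1 2 + w 2 * pd f x 2 2))
      + E3 (pd f x) * (w 6 - (w 0 * pd f x 0 3 + w 1 * pd f x 1 3 + w 2 * pd f x 2 3)) := by
  rw [evalPsi, vA_apply, vA_apply, vA_apply]
  generalize pd f x = c
  simp [Matrix.det_succ_row_zero, Fin.sum_univ_succ, Fin.succAbove, E0, E1, E2, E3, d3]
  ring

/-- The value of a 2-form with the given mixed and base components. -/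
structure FF (F : Form ℂ 7) (b01 b02 b12 : ℝ) (c : Fin 3 → Fin 4 → ℝ) : Prop where
  gr : isGrade 2 F
  h01 : F {0, 1} = Complex.I * b01
  h02 : F {0, 2} = Complex.I * b02
  h12 : F {1, 2} = Complex.I * b12
  h03 : F {0, 3} = Complex.I * c 0 0
  h04 : F {0, 4} = Complex.I * c 0 1
  h05 : F {0, 5} = Complex.I * c 0 2
  h06 : F {0, 6} = Complex.I * c 0 3
  h13 : F {1, 3} = Complex.I * c 1 0
  h14 : F {1, 4} = Complex.I * c 1 1
  h15 : F {1, 5} = Complex.I * c 1 2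
  h16 : F {1, 6} = Complex.I * c 1 3
  h23 : F {2, 3} = Complex.I * c 2 0
  h24 : F {2, 4} = Complex.I * c 2 1
  h25 : F {2, 5} = Complex.I * c 2 2
  h26 : F {2, 6} = Complex.I * c 2 3
  h34 : F {3, 4} = 0
  h35 : F {3, 5} = 0
  h36 : F {3, 6} = 0
  h45 : F {4, 5} = 0
  h46 : F {4, 6} = 0
  h56 : F {5, 6} = 0

lemma FF_F (A : (Fin 3 → ℝ) → (Fin 3 → ℝ)) (f : (Fin 3 → ℝ) → (Fin 4 → ℝ)) (x : Fin 3 → ℝ) :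
    FF (FB7 A x + FSA f x) (pd A x 0 1 - pd A x 1 0) (pd A x 0 2 - pd A x 2 0)
      (pd A x 1 2 - pd A x 2 1) (pd f x) := by
  have key : ∀ s, (FB7 A x + FSA f x) s = Complex.I * ((gammaB7 A x s + gammaA f x s : ℝ) : ℂ) := by
    intro s; simp only [Pi.add_apply, FB7, FSA]; push_cast; ring
  constructor
  · exact F_grade A f x
  all_goals
    rw [key, FB7_apply, gammaA_apply]
    simp (decide := true) only [Fin.sum_univ_succ, Fin.sum_univ_zero, if_true, if_false,
      Finset.univ_eq_empty, Finset.sum_empty]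
    simp

lemma FB_zero_iff (A : (Fin 3 → ℝ) → (Fin 3 → ℝ)) (x : Fin 3 → ℝ) :
    FB7 A x = 0 ↔ pd A x 0 1 - pd A x 1 0 = 0 ∧ pd A x 0 2 - pd A x 2 0 = 0 ∧
      pd A x 1 2 - pd A x 2 1 = 0 := by
  constructor
  · intro h
    have k : ∀ s, gammaB7 A x s = 0 := by
      intro s
      have := congrFun h s
      simpa [FB7] using this
    refine ⟨?_, ?_, ?_⟩
    · have := k {0, 1}
      rw [FB7_apply] at this
      simpa (decide := true) using this
    · have := k {0, 2}
      rw [FB7_apply] at this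
      simpa (decide := true) using this
    · have := k {1, 2}
      rw [FB7_apply] at this
      simpa (decide := true) using this
  · rintro ⟨h1, h2, h3⟩
    ext s
    simp only [FB7, FB7_apply, h1, h2, h3]
    simp

/-- The deformed Donaldson-Thomas expression. -/
def TT (F : Form ℂ 7) : Form ℂ 7 := (6 : ℂ)⁻¹ • wedge F (wedge F F) + wedge F psi7

lemma T_eq {F : Form ℂ 7} {b01 b02 b12 : ℝ} {c : Fin 3 → Fin 4 → ℝ} (h : FF F b01 b02 b12 c) :
    TT F {1,2,3,4,5,6} = Complex.I * b12 ∧ TT F {0,2,3,4,5,6} = Complex.I * b02 ∧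
    TT F {0,1,3,4,5,6} = Complex.I * b01 ∧ TT F {0,1,2,4,5,6} = - (Complex.I * (E0 c : ℝ)) ∧
    TT F {0,1,2,3,5,6} = Complex.I * (E1 c : ℝ) ∧ TT F {0,1,2,3,4,6} = - (Complex.I * (E2 c : ℝ)) ∧
    TT F {0,1,2,3,4,5} = Complex.I * (E3 c : ℝ) := by
  have h2 : isGrade 4 (wedge F F) := wedge_grade h.gr h.gr
  have hI : Complex.I ^ 3 = - Complex.I := Complex.I_pow_three
  refine ⟨?_, ?_, ?_, ?_, ?_, ?_, ?_⟩
  all_goals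
    simp only [TT, Pi.add_apply, Pi.smul_apply, smul_eq_mul]
    rw [wedge6 h.gr h2 _ _ _ _ _ _ (by decide) (by decide) (by decide) (by decide) (by decide),
      wedge6 h.gr psi7_grade _ _ _ _ _ _ (by decide) (by decide) (by decide) (by decide)
        (by decide)]
    simp only [h.h34, h.h35, h.h36, h.h45, h.h46, h.h56, zero_mul, add_zero, sub_zero, zero_add]
    repeat rw [wedge4 h.gr _ _ _ _ _ (by decide) (by decide) (by decide)]
    simp only [h.h34, h.h35, h.h36, h.h45, h.h46, h.h56, zero_mul, mul_zero, add_zero, sub_zero,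
      zero_add, h.h01, h.h02, h.h12, h.h03, h.h04, h.h05, h.h06, h.h13, h.h14, h.h15, h.h16,
      h.h23, h.h24, h.h25, h.h26]
    simp (decide := true) only [psi7, if_true, if_false, E0, E1, E2, E3, d3]
    push_cast
    ring_nf
    try simp only [hI]
    try ring

lemma Q_eq {F : Form ℂ 7} {c : Fin 3 → Fin 4 → ℝ} (h : FF F 0 0 0 c)
    (e0 : E0 c = 0) (e1 : E1 c = 0) (e2 : E2 c = 0) (e3 : E3 c = 0) :
    wedge phi7 (hstar (wedge F F)) = 0 := by
  have h2 : isGrade 4 (wedge F F) := wedge_grade h.gr h.gr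
  have h3 : isGrade 3 (hstar (wedge F F)) := by
    intro s hs
    have : sᶜ.card ≠ 4 := by
      rw [Finset.card_compl, Fintype.card_fin]
      have := Finset.card_le_univ s
      rw [Fintype.card_fin] at this
      omega
    simp [hstar, h2 _ this]
  have h6 : isGrade 6 (wedge phi7 (hstar (wedge F F))) := wedge_grade phi7_grade h3
  have e0' : ((E0 c : ℝ) : ℂ) = 0 := by rw [e0]; simp
  have e1' : ((E1 c : ℝ) : ℂ) = 0 := by rw [e1]; simp
  have e2' : ((E2 c : ℝ) : ℂ) = 0 := by rw [e2]; simp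
  have e3' : ((E3 c : ℝ) : ℂ) = 0 := by rw [e3]; simp
  simp only [E0, E1, E2, E3, d3] at e0' e1' e2' e3'
  push_cast at e0' e1' e2' e3'
  have hI : Complex.I ^ 2 = -1 := Complex.I_sq
  ext u
  rw [Pi.zero_apply]
  by_cases hu : u.card = 6
  swap
  · exact h6 u hu
  rcases sixsets u hu with rfl | rfl | rfl | rfl | rfl | rfl | rfl
  all_goals
    first
    | rw [phiW0]
    | rw [phiW1]
    | rw [phiW2]
    | rw [phiW3]
    | rw [phiW4]
    | rw [phiW5]
    | rw [phiW6]
    repeat rw [wedge4 h.gr _ _ _ _ _ (by decide) (by decide) (by decide)]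
    simp only [h.h34, h.h35, h.h36, h.h45, h.h46, h.h56, zero_mul, mul_zero, add_zero, sub_zero,
      zero_add, h.h01, h.h02, h.h12, h.h03, h.h04, h.h05, h.h06, h.h13, h.h14, h.h15, h.h16,
      h.h23, h.h24, h.h25, h.h26, Complex.ofReal_zero]
  · ring
  · ring
  · linear_combination 2 * Complex.I ^ 2 * (e0' * c 2 0 + e1' * c 2 1 + e2' * c 2 2 + e3' * c 2 3)
  · linear_combination -2 * Complex.I ^ 2 * (e0' * c 1 0 + e1' * c 1 1 + e2' * c 1 2 + e3' * c 1 3)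
  · linear_combination 2 * Complex.I ^ 2 * (e0' * c 0 0 + e1' * c 0 1 + e2' * c 0 2 + e3' * c 0 3)

lemma T_iff {F : Form ℂ 7} {b01 b02 b12 : ℝ} {c : Fin 3 → Fin 4 → ℝ} (h : FF F b01 b02 b12 c) :
    TT F = 0 ↔ (E0 c = 0 ∧ E1 c = 0 ∧ E2 c = 0 ∧ E3 c = 0) ∧ (b01 = 0 ∧ b02 = 0 ∧ b12 = 0) := by
  obtain ⟨t0, t1, t2, t3, t4, t5, t6⟩ := T_eq h
  have h2 : isGrade 4 (wedge F F) := wedge_grade h.gr h.gr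
  constructor
  · intro hT
    rw [hT] at t0 t1 t2 t3 t4 t5 t6
    simp at t0 t1 t2 t3 t4 t5 t6
    exact ⟨⟨t3, t4, t5, t6⟩, t2, t1, t0⟩
  · rintro ⟨⟨a0, a1, a2, a3⟩, a4, a5, a6⟩
    ext u
    rw [Pi.zero_apply]
    by_cases hu : u.card = 6
    · rcases sixsets u hu with rfl | rfl | rfl | rfl | rfl | rfl | rfl
      · rw [t6, a3]; simp
      · rw [t5, a2]; simp
      · rw [t4, a1]; simp
      · rw [t3, a0]; simp
      · rw [t2, a4]; simp
      · rw [t1, a5]; simp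
      · rw [t0, a6]; simp
    · have g1 := wedge_grade h.gr h2 u hu
      have g2 := wedge_grade h.gr (psi7_grade (K := ℂ)) u hu
      simp [TT, g1, g2]

lemma assoc_iff (f : (Fin 3 → ℝ) → (Fin 4 → ℝ)) (x : Fin 3 → ℝ) :
    (∀ w : Fin 7 → ℝ, evalForm psi7 ![vA f x 0, vA f x 1, vA f x 2, w] = 0) ↔
    (E0 (pd f x) = 0 ∧ E1 (pd f x) = 0 ∧ E2 (pd f x) = 0 ∧ E3 (pd f x) = 0) := by
  simp only [eval_eq]
  constructor
  · intro h
    refine ⟨?_, ?_, ?_, ?_⟩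
    · simpa using h ![0, 0, 0, 1, 0, 0, 0]
    · simpa using h ![0, 0, 0, 0, 1, 0, 0]
    · simpa using h ![0, 0, 0, 0, 0, 1, 0]
    · simpa using h ![0, 0, 0, 0, 0, 0, 1]
  · rintro ⟨h0, h1, h2, h3⟩ w
    rw [h0, h1, h2, h3]; ring

/-- Proposition 4.4.  The following are equivalent:
(1) the graph `S` is associative with an appropriate orientation and `∇^B` is flat
    (`F_∇^B = 0`);
(2) `F_∇³/6 + F_∇ ∧ *₇φ = 0` on `B`;
(3) `F_∇³/6 + F_∇ ∧ *₇φ = 0` and `φ ∧ *₇(F_∇²) = 0` on `B`,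
where `F_∇ = F_∇^B + F_∇^S`. -/
theorem statement8 (B : Set (Fin 3 → ℝ)) (hB : IsOpen B)
    (f : (Fin 3 → ℝ) → (Fin 4 → ℝ)) (hf : ContDiffOn ℝ (⊤ : ℕ∞) f B)
    (A : (Fin 3 → ℝ) → (Fin 3 → ℝ)) (hA : ContDiffOn ℝ (⊤ : ℕ∞) A B) :
    (((∀ x ∈ B, ∀ w : Fin 7 → ℝ,
        evalForm psi7 ![vA f x 0, vA f x 1, vA f x 2, w] = 0) ∧
      (∀ x ∈ B, FB7 A x = 0)) ↔
      (∀ x ∈ B,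
        (6 : ℂ)⁻¹ • wedge (FB7 A x + FSA f x)
            (wedge (FB7 A x + FSA f x) (FB7 A x + FSA f x)) +
          wedge (FB7 A x + FSA f x) psi7 = 0)) ∧
    (((∀ x ∈ B, ∀ w : Fin 7 → ℝ,
        evalForm psi7 ![vA f x 0, vA f x 1, vA f x 2, w] = 0) ∧
      (∀ x ∈ B, FB7 A x = 0)) ↔
      (∀ x ∈ B,
        ((6 : ℂ)⁻¹ • wedge (FB7 A x + FSA f x)
            (wedge (FB7 A x + FSA f x) (FB7 A x + FSA f x)) +
          wedge (FB7 A x + FSA f x) psi7 = 0) ∧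
        wedge phi7 (hstar (wedge (FB7 A x + FSA f x) (FB7 A x + FSA f x))) = 0)) := by
  have key : ∀ x, ((∀ w : Fin 7 → ℝ, evalForm psi7 ![vA f x 0, vA f x 1, vA f x 2, w] = 0) ∧
      FB7 A x = 0) ↔ TT (FB7 A x + FSA f x) = 0 := fun x => by
    rw [assoc_iff, FB_zero_iff, T_iff (FF_F A f x)]
  have key2 : ∀ x, TT (FB7 A x + FSA f x) = 0 →
      wedge phi7 (hstar (wedge (FB7 A x + FSA f x) (FB7 A x + FSA f x))) = 0 := fun x hx => by
    have hF := FF_F A f x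
    obtain ⟨⟨e0, e1, e2, e3⟩, b0, b1, b2⟩ := (T_iff hF).1 hx
    rw [b0, b1, b2] at hF
    exact Q_eq hF e0 e1 e2 e3
  refine ⟨⟨fun h x hx => (key x).1 ⟨h.1 x hx, h.2 x hx⟩, fun h =>
    ⟨fun x hx => ((key x).2 (h x hx)).1, fun x hx => ((key x).2 (h x hx)).2⟩⟩,
    ⟨fun h x hx => ?_, fun h =>
    ⟨fun x hx => ((key x).2 (h x hx).1).1, fun x hx => ((key x).2 (h x hx).1).2⟩⟩⟩
  have hT := (key x).1 ⟨h.1 x hx, h.2 x hx⟩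
  exact ⟨hT, key2 x hT⟩

end FMpaper
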